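/- arXiv:1408.2981 — 3 statements merged into one kernel-verified Lean document; each statement's English description precedes it below -/
import Mathlib

section
/- Subspace decomposition of the two-grid iteration matrix. Let N, m_f, m_c ≥ 1, let C, M be real N×N matrices with generalized eigen-data: vectors e_1,…,e_N ∈ ℝ^N and reals λ_1,…,λ_N such that C e_j = λ_j M e_j for all j and e_j^T M e_k = δ_{jk} for all j,k. Let X, Y, X', Y' be real m_f×m_f matrices and P a real m_f×m_c matrix; set the Galerkin coarse matrices X_c := P^T X P and Y_c := P^T Y P, and assume that λ_j X' + Y' and λ_j X_c + Y_c are invertible for every j. Define A⊗ := C ⊗ X + M ⊗ Y, W⊗ := C ⊗ X' + M ⊗ Y', A⊗_c := C ⊗ X_c + M ⊗ Y_c, P̂ := Id_N ⊗ P, S := Id − (W⊗)^{−1} A⊗, and for integers ν₁, ν₂ ≥ 0 the two-grid iteration matrix M⊗ := S^{ν₂}(Id − P̂ (A⊗_c)^{−1} P̂^T A⊗) S^{ν₁}. Then for every j and every v ∈ ℝ^{m_f}: M⊗(e_j ⊗ v) = e_j ⊗ (M_j v), where M_j := (Id − (λ_j X' + Y')^{−1}(λ_j X + Y))^{ν₂}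 (Id − P (λ_j X_c + Y_c)^{−1} P^T (λ_j X + Y)) (Id − (λ_j X' + Y')^{−1}(λ_j X + Y))^{ν₁}. -/
/-!
On `e ⊗ v` with `C e = λ M e`, every pencil `C ⊗ Z + M ⊗ T` acts as
`e ⊗ v ↦ (M e) ⊗ ((λ Z + T) v)`; an invertible pencil therefore maps `(M e) ⊗ v` back to
`e ⊗ ((λ Z + T)⁻¹ v)`, so the factor `M` cancels in each product `W⁻¹ A`. The transfer operators
`Id ⊗ P` and `(Id ⊗ P)ᵀ` only touch the second factor. Hence each factor of the iteration matrix
leaves the set of vectors `e_j ⊗ v` invariant and acts there through its two-dimensional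
counterpart.

The remaining point is that the pencils `W⊗` and `A⊗_c` are invertible (`isUnit_pencil`), so that
the matrix inverses are genuine. By `M`-orthonormality every vector is a sum of terms
`(M e_j) ⊗ u_j`, and each term is the image of `e_j ⊗ ((λ_j Z + T)⁻¹ u_j)`.
-/

open Matrix
open scoped Kronecker

/-- Kronecker (tensor) product of two vectors: `(e ⊗ v)_{(i,a)} = e_i v_a`. -/
def vecKron {N m : Type*} (e : N → ℝ) (v : m → ℝ) : N × m → ℝ :=
  fun p => e p.1 * v p.2

lemma kronecker_mulVec_vecKron {n n' m m' : Type*} [Fintype n'] [Fintype m']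
    (A : Matrix n n' ℝ) (B : Matrix m m' ℝ) (e : n' → ℝ) (v : m' → ℝ) :
    (A ⊗ₖ B) *ᵥ vecKron e v = vecKron (A *ᵥ e) (B *ᵥ v) := by
  ext ⟨i, a⟩
  simp only [mulVec, dotProduct, vecKron, kroneckerMap_apply, Fintype.sum_prod_type,
    Finset.sum_mul_sum]
  exact Finset.sum_congr rfl fun _ _ => Finset.sum_congr rfl fun _ _ => by ring

lemma vecKron_sub {n m : Type*} (e : n → ℝ) (v w : m → ℝ) :
    vecKron e (v - w) = vecKron e v - vecKron e w := by
  ext p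
  simp [vecKron, mul_sub]

/-- On a generalized eigenvector `e`, a pencil reduces to a single block in the second factor. -/
lemma pencil_mulVec_vecKron {n m : Type*} [Fintype n] [Fintype m]
    {C M : Matrix n n ℝ} {e : n → ℝ} {l : ℝ} (h : C *ᵥ e = l • (M *ᵥ e))
    (Z T : Matrix m m ℝ) (v : m → ℝ) :
    (C ⊗ₖ Z + M ⊗ₖ T) *ᵥ vecKron e v = vecKron (M *ᵥ e) ((l • Z + T) *ᵥ v) := by
  rw [add_mulVec, kronecker_mulVec_vecKron, kronecker_mulVec_vecKron, h, add_mulVec, smul_mulVec]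
  ext p
  simp only [vecKron, Pi.add_apply, Pi.smul_apply, smul_eq_mul]
  ring

/-- The dual completeness relation `∑ⱼ (M eⱼ) eⱼᵀ = Id` of an `M`-orthonormal system. -/
lemma sum_mulVec_mul_eq {n : Type*} [Fintype n] [DecidableEq n]
    {M : Matrix n n ℝ} {e : n → n → ℝ}
    (hortho : ∀ j k, e j ⬝ᵥ (M *ᵥ e k) = if j = k then (1 : ℝ) else 0) (i k : n) :
    ∑ j, (M *ᵥ e j) i * e j k = if i = k then 1 else 0 := by
  have h : Matrix.of e * (M * (Matrix.of e)ᵀ) = 1 := by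
    ext j k
    rw [Matrix.one_apply, ← hortho j k]
    rfl
  have h' : M * (Matrix.of e)ᵀ * Matrix.of e = 1 := mul_eq_one_comm.mp h
  rw [← Matrix.one_apply, ← h']
  rfl

/-- A pencil all of whose blocks `λⱼ Z + T` are invertible is invertible. -/
lemma isUnit_pencil {n m : Type*} [Fintype n] [DecidableEq n] [Fintype m] [DecidableEq m]
    {C M : Matrix n n ℝ} {e : n → n → ℝ} {lam : n → ℝ}
    (heig : ∀ j, C *ᵥ e j = lam j • (M *ᵥ e j))
    (hortho : ∀ j k, e j ⬝ᵥ (M *ᵥ e k) = if j = k then (1 : ℝ) else 0)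
    {Z T : Matrix m m ℝ} (hinv : ∀ j, IsUnit (lam j • Z + T)) :
    IsUnit (C ⊗ₖ Z + M ⊗ₖ T) := by
  rw [← mulVec_surjective_iff_isUnit]
  intro w
  -- The coordinates of `w` in the expansion `w = ∑ⱼ (M eⱼ) ⊗ uⱼ`.
  let u : n → m → ℝ := fun j a => ∑ k, e j k * w (k, a)
  refine ⟨∑ j, vecKron (e j) ((lam j • Z + T)⁻¹ *ᵥ u j), ?_⟩
  rw [mulVec_sum]
  have hterm : ∀ j, (C ⊗ₖ Z + M ⊗ₖ T) *ᵥ vecKron (e j) ((lam j • Z + T)⁻¹ *ᵥ u j)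
      = vecKron (M *ᵥ e j) (u j) := fun j => by
    rw [pencil_mulVec_vecKron (heig j), mulVec_mulVec,
      mul_nonsing_inv _ ((isUnit_iff_isUnit_det _).mp (hinv j)), one_mulVec]
  simp only [hterm]
  ext ⟨i, a⟩
  simp only [Finset.sum_apply, vecKron, u, Finset.mul_sum, ← mul_assoc]
  rw [Finset.sum_comm]
  simp only [← Finset.sum_mul, sum_mulVec_mul_eq hortho]
  simp

lemma inv_pencil_mulVec_vecKron {n m : Type*} [Fintype n] [DecidableEq n] [Fintype m]
    [DecidableEq m] {C M : Matrix n n ℝ} {e : n → ℝ} {l : ℝ} (h : C *ᵥ e = l • (M *ᵥ e))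
    {Z T : Matrix m m ℝ} (hblock : IsUnit (l • Z + T)) (hpencil : IsUnit (C ⊗ₖ Z + M ⊗ₖ T))
    (v : m → ℝ) :
    (C ⊗ₖ Z + M ⊗ₖ T)⁻¹ *ᵥ vecKron (M *ᵥ e) v = vecKron e ((l • Z + T)⁻¹ *ᵥ v) := by
  have hv : vecKron (M *ᵥ e) v
      = (C ⊗ₖ Z + M ⊗ₖ T) *ᵥ vecKron e ((l • Z + T)⁻¹ *ᵥ v) := by
    rw [pencil_mulVec_vecKron h, mulVec_mulVec,
      mul_nonsing_inv _ ((isUnit_iff_isUnit_det _).mp hblock), one_mulVec]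
  rw [hv, mulVec_mulVec, nonsing_inv_mul _ ((isUnit_iff_isUnit_det _).mp hpencil), one_mulVec]

lemma pow_mulVec_vecKron {n m : Type*} [Fintype n] [DecidableEq n] [Fintype m] [DecidableEq m]
    {S : Matrix (n × m) (n × m) ℝ} {s : Matrix m m ℝ} {e : n → ℝ}
    (h : ∀ v, S *ᵥ vecKron e v = vecKron e (s *ᵥ v)) (k : ℕ) (v : m → ℝ) :
    (S ^ k) *ᵥ vecKron e v = vecKron e ((s ^ k) *ᵥ v) := by
  induction k generalizing v with
  | zero => simp
  | succ k ih => rw [pow_succ, pow_succ, ← mulVec_mulVec, h, ih, mulVec_mulVec]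

/-- **Subspace decomposition of the two-grid iteration matrix.**
The 3D two-grid error propagation matrix (line smoothing plus horizontal-only coarse grid
correction with Galerkin coarse operators `X_c = Pᵀ X P`, `Y_c = Pᵀ Y P` and restriction
`(Id ⊗ P)ᵀ`) acts on each subspace `span{e_j} ⊗ ℝ^{m_f}` as the corresponding 2D two-grid
iteration matrix `M_j`. -/
theorem two_grid_subspace_decomposition
    (N mf mc : ℕ) (hN : 1 ≤ N) (hmf : 1 ≤ mf) (hmc : 1 ≤ mc)
    (C M : Matrix (Fin N) (Fin N) ℝ)
    (e : Fin N → Fin N → ℝ) (lam : Fin N → ℝ)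
    (heig : ∀ j, C *ᵥ e j = lam j • (M *ᵥ e j))
    (hortho : ∀ j k, e j ⬝ᵥ (M *ᵥ e k) = if j = k then (1 : ℝ) else 0)
    (X Y X' Y' : Matrix (Fin mf) (Fin mf) ℝ)
    (P : Matrix (Fin mf) (Fin mc) ℝ)
    (hWinv : ∀ j, IsUnit (lam j • X' + Y'))
    (hcinv : ∀ j, IsUnit (lam j • (Pᵀ * X * P) + Pᵀ * Y * P))
    (ν₁ ν₂ : ℕ) :
    ∀ (j : Fin N) (v : Fin mf → ℝ),
      ((1 - (C ⊗ₖ X' + M ⊗ₖ Y')⁻¹ * (C ⊗ₖ X + M ⊗ₖ Y)) ^ ν₂ *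
        (1 - ((1 : Matrix (Fin N) (Fin N) ℝ) ⊗ₖ P) *
              (C ⊗ₖ (Pᵀ * X * P) + M ⊗ₖ (Pᵀ * Y * P))⁻¹ *
              ((1 : Matrix (Fin N) (Fin N) ℝ) ⊗ₖ P)ᵀ *
              (C ⊗ₖ X + M ⊗ₖ Y)) *
        (1 - (C ⊗ₖ X' + M ⊗ₖ Y')⁻¹ * (C ⊗ₖ X + M ⊗ₖ Y)) ^ ν₁) *ᵥ vecKron (e j) v
      = vecKron (e j)
          (((1 - (lam j • X' + Y')⁻¹ * (lam j • X + Y)) ^ ν₂ *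
            (1 - P * (lam j • (Pᵀ * X * P) + Pᵀ * Y * P)⁻¹ * Pᵀ * (lam j • X + Y)) *
            (1 - (lam j • X' + Y')⁻¹ * (lam j • X + Y)) ^ ν₁) *ᵥ v) := by
  intro j v
  have hW := isUnit_pencil heig hortho hWinv
  have hc := isUnit_pencil heig hortho hcinv
  have hS : ∀ v, (1 - (C ⊗ₖ X' + M ⊗ₖ Y')⁻¹ * (C ⊗ₖ X + M ⊗ₖ Y)) *ᵥ vecKron (e j) v
      = vecKron (e j) ((1 - (lam j • X' + Y')⁻¹ * (lam j • X + Y)) *ᵥ v) := fun v => by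
    rw [sub_mulVec, sub_mulVec, vecKron_sub, one_mulVec, one_mulVec, ← mulVec_mulVec,
      pencil_mulVec_vecKron (heig j), inv_pencil_mulVec_vecKron (heig j) (hWinv j) hW,
      mulVec_mulVec]
  have hK : ∀ v, (1 - ((1 : Matrix (Fin N) (Fin N) ℝ) ⊗ₖ P) *
              (C ⊗ₖ (Pᵀ * X * P) + M ⊗ₖ (Pᵀ * Y * P))⁻¹ *
              ((1 : Matrix (Fin N) (Fin N) ℝ) ⊗ₖ P)ᵀ *
              (C ⊗ₖ X + M ⊗ₖ Y)) *ᵥ vecKron (e j) v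
      = vecKron (e j) ((1 - P * (lam j • (Pᵀ * X * P) + Pᵀ * Y * P)⁻¹ * Pᵀ *
          (lam j • X + Y)) *ᵥ v) := fun v => by
    have hT : ((1 : Matrix (Fin N) (Fin N) ℝ) ⊗ₖ P)ᵀ = (1 : Matrix (Fin N) (Fin N) ℝ) ⊗ₖ Pᵀ := by
      rw [← kroneckerMap_transpose, transpose_one]
    rw [hT, sub_mulVec, sub_mulVec, vecKron_sub, one_mulVec, one_mulVec]
    simp only [← mulVec_mulVec]
    rw [pencil_mulVec_vecKron (heig j), kronecker_mulVec_vecKron, one_mulVec,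
      inv_pencil_mulVec_vecKron (heig j) (hcinv j) hc, kronecker_mulVec_vecKron, one_mulVec]
  rw [← mulVec_mulVec, ← mulVec_mulVec, pow_mulVec_vecKron hS, hK, pow_mulVec_vecKron hS,
    mulVec_mulVec, mulVec_mulVec, Matrix.mul_assoc]
end

section
/- Convergence of the preconditioned Richardson iteration for sufficiently many V-cycles. Let A⊗ be a real symmetric positive definite n×n matrix with energy norm ‖x‖_* := sqrt(x^T A⊗ x). Let δA and M⊗ be real n×n matrices, μ ≥ 1 an integer, and Δ, ρ real numbers with 0 ≤ Δ < 1 and 0 < ρ < 1, such that for all x ∈ ℝ^n: ‖(A⊗)^{−1}(δA x)‖_* ≤ Δ‖x‖_* and ‖M⊗ x‖_* ≤ ρ‖x‖_*. Set A := A⊗ + δA and E := Id − (Id − (M⊗)^μ)(A⊗)^{−1}A. If μ · log ρ < log((1 − Δ)/(1 + Δ)) (i.e. μ > log_ρ((1 − Δ)/(1 + Δ))), then Δ + (1 + Δ)ρ^μ < 1 and for all x ∈ ℝ^n: ‖E x‖_* ≤ (Δ + (1 + Δ)ρ^μ)‖x‖_*; in particular the preconditioned Richardson iteration converges with rate strictly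 less than 1. -/
/-!
Writing `B = (A⊗)⁻¹ δA`, the error propagation matrix satisfies `E x = M^μ (x + B x) - B x`.
Since `‖B x‖_* ≤ Δ ‖x‖_*` and `‖M^μ y‖_* ≤ ρ^μ ‖y‖_*`, the triangle inequality for the energy
norm gives the rate `ρ^μ (1 + Δ) + Δ`; exponentiating the condition on `μ` gives
`ρ^μ < (1 - Δ) / (1 + Δ)`, so that this rate is below one. The energy norm obeys the triangle
inequality because a factorisation `A⊗ = Cᵀ C` turns it into the Euclidean norm of `C x`.
-/

open Matrix

/-- The energy norm `‖x‖_* = sqrt(xᵀ A x)` induced by a matrix `A`. -/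
noncomputable def energyNorm {n : ℕ} (A : Matrix (Fin n) (Fin n) ℝ) (x : Fin n → ℝ) : ℝ :=
  Real.sqrt (x ⬝ᵥ (A *ᵥ x))

/-- The energy norm is the pullback of the Euclidean norm along some matrix. -/
lemma exists_energyNorm_eq_norm {n : ℕ} {A : Matrix (Fin n) (Fin n) ℝ} (hA : A.PosDef) :
    ∃ C : Matrix (Fin n) (Fin n) ℝ, ∀ x, energyNorm A x = ‖WithLp.toLp 2 (C *ᵥ x)‖ := by
  obtain ⟨C, rfl⟩ : ∃ C : Matrix (Fin n) (Fin n) ℝ, A = Cᴴ * C := by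
    open scoped MatrixOrder in
    exact CStarAlgebra.nonneg_iff_eq_star_mul_self.mp hA.posSemidef.nonneg
  refine ⟨C, fun x => ?_⟩
  rw [energyNorm, EuclideanSpace.norm_eq, ← mulVec_mulVec, dotProduct_mulVec,
    conjTranspose_eq_transpose_of_trivial, vecMul_transpose]
  simp [dotProduct, pow_two]

lemma energyNorm_add_le {n : ℕ} {A : Matrix (Fin n) (Fin n) ℝ} (hA : A.PosDef)
    (x y : Fin n → ℝ) : energyNorm A (x + y) ≤ energyNorm A x + energyNorm A y := by
  obtain ⟨C, hC⟩ := exists_energyNorm_eq_norm hA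
  simp only [hC, mulVec_add, WithLp.toLp_add]
  exact norm_add_le _ _

lemma energyNorm_sub_le {n : ℕ} {A : Matrix (Fin n) (Fin n) ℝ} (hA : A.PosDef)
    (x y : Fin n → ℝ) : energyNorm A (x - y) ≤ energyNorm A x + energyNorm A y := by
  obtain ⟨C, hC⟩ := exists_energyNorm_eq_norm hA
  simp only [hC, mulVec_sub, WithLp.toLp_sub]
  exact norm_sub_le _ _

lemma energyNorm_pow_mulVec_le {n : ℕ} {A M : Matrix (Fin n) (Fin n) ℝ} {ρ : ℝ} (hρ : 0 ≤ ρ)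
    (hM : ∀ x, energyNorm A (M *ᵥ x) ≤ ρ * energyNorm A x) (k : ℕ) (x : Fin n → ℝ) :
    energyNorm A (M ^ k *ᵥ x) ≤ ρ ^ k * energyNorm A x := by
  induction k with
  | zero => simp
  | succ k ih =>
    rw [pow_succ', pow_succ', ← mulVec_mulVec, mul_assoc]
    exact (hM _).trans (mul_le_mul_of_nonneg_left ih hρ)

/-- **Convergence of the preconditioned Richardson iteration for sufficiently many
V-cycles.** If `0 ≤ Δ < 1`, `0 < ρ < 1` and `μ log ρ < log((1−Δ)/(1+Δ))`
(i.e. `μ > log_ρ((1−Δ)/(1+Δ))`), then `Δ + (1+Δ)ρ^μ < 1` and the error propagation matrix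
`E = Id − (Id − (M⊗)^μ)(A⊗)⁻¹ A` of the preconditioned Richardson iteration contracts the
`A⊗`-energy norm with rate `Δ + (1+Δ)ρ^μ`, which is strictly less than 1. -/
theorem richardson_vcycle_preconditioned_convergence
    (n : ℕ) (Akron : Matrix (Fin n) (Fin n) ℝ) (hA : Akron.PosDef)
    (dA Mkron : Matrix (Fin n) (Fin n) ℝ)
    (μ : ℕ) (hμ : 1 ≤ μ)
    (Δ ρ : ℝ) (hΔ : 0 ≤ Δ) (hΔ1 : Δ < 1) (hρ : 0 < ρ) (hρ1 : ρ < 1)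
    (hpert : ∀ x : Fin n → ℝ, energyNorm Akron (Akron⁻¹ *ᵥ (dA *ᵥ x)) ≤ Δ * energyNorm Akron x)
    (hMG : ∀ x : Fin n → ℝ, energyNorm Akron (Mkron *ᵥ x) ≤ ρ * energyNorm Akron x)
    (hμcond : (μ : ℝ) * Real.log ρ < Real.log ((1 - Δ) / (1 + Δ))) :
    Δ + (1 + Δ) * ρ ^ μ < 1 ∧
    ∀ x : Fin n → ℝ,
      energyNorm Akron ((1 - (1 - Mkron ^ μ) * Akron⁻¹ * (Akron + dA)) *ᵥ x)
        ≤ (Δ + (1 + Δ) * ρ ^ μ) * energyNorm Akron x := by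
  constructor
  · have h1 : 0 < 1 + Δ := by linarith
    rw [← Real.log_pow, Real.log_lt_log_iff (pow_pos hρ μ) (div_pos (by linarith) h1),
      lt_div_iff₀ h1] at hμcond
    linarith
  · intro x
    have hE : (1 - (1 - Mkron ^ μ) * Akron⁻¹ * (Akron + dA)) *ᵥ x
        = Mkron ^ μ *ᵥ (x + Akron⁻¹ *ᵥ (dA *ᵥ x)) - Akron⁻¹ *ᵥ (dA *ᵥ x) := by
      have hinv : Akron⁻¹ * Akron = 1 :=
        nonsing_inv_mul _ ((isUnit_iff_isUnit_det _).mp hA.isUnit)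
      rw [mul_assoc, mul_add, hinv]
      simp only [sub_mulVec, one_mulVec, mulVec_add, add_mulVec, ← mulVec_mulVec]
      abel
    rw [hE]
    have hsum := energyNorm_add_le hA x (Akron⁻¹ *ᵥ (dA *ᵥ x))
    have hB := hpert x
    calc _ ≤ _ := energyNorm_sub_le hA _ _
      _ ≤ ρ ^ μ * ((1 + Δ) * energyNorm Akron x) + Δ * energyNorm Akron x := by
        gcongr
        refine (energyNorm_pow_mulVec_le hρ.le hMG μ _).trans ?_
        gcongr
        linarith
      _ = _ := by ring
end

section
/- Energy-norm contraction of the 3D iteration from uniform contraction on the vertical eigenspaces. Let N, m ≥ 1, let C and M be real symmetric N×N matrices with generalized eigen-data: vectors e_1,…,e_N ∈ ℝ^N and reals λ_1,…,λ_N such that C e_j = λ_j M e_j for all j and e_j^T M e_k = δ_{jk} for all j,k. Let X and Y be real symmetric m×m matrices such that A_j := λ_j X + Y is positive semidefinite for every j, and set A⊗ := C ⊗ X + M ⊗ Y. Let T be a real (N·m)×(N·m) matrix and T_1,…,T_N real m×m matrices such that T(e_j ⊗ v) = e_j ⊗ (T_j v) for every j and every v ∈ ℝ^m. If ρ ≥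 0 satisfies (T_j v)^T A_j (T_j v) ≤ ρ² · v^T A_j v for every j and every v ∈ ℝ^m, then (T x)^T A⊗ (T x) ≤ ρ² · x^T A⊗ x for every x ∈ ℝ^{N·m}. -/
/-!
`M`-orthonormality makes `e_1, …, e_N` a basis of `ℝ^N`, so every `x` is a sum of pure tensors
`e_j ⊗ w_j` (`exists_eq_sum_vecKron`). The eigenvalue equation together with `M`-orthonormality
makes distinct summands `A⊗`-orthogonal, with `e_j ⊗ w_j` having the energy of `w_j` with respect
to `A_j` (`energy_sum_vecKron`). Since `T` sends `∑ e_j ⊗ w_j` to `∑ e_j ⊗ T_j w_j`, the claim is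
the sum over `j` of the contraction estimates of the blocks.
-/

open Matrix
open scoped Kronecker

lemma kronecker_mulVec_vecKron_s13 {N m : ℕ} (B : Matrix (Fin N) (Fin N) ℝ)
    (X : Matrix (Fin m) (Fin m) ℝ) (u : Fin N → ℝ) (v : Fin m → ℝ) :
    (B ⊗ₖ X) *ᵥ vecKron u v = vecKron (B *ᵥ u) (X *ᵥ v) := by
  ext ⟨i, a⟩
  simp only [mulVec, dotProduct, vecKron, kroneckerMap_apply, Fintype.sum_prod_type,
    Finset.sum_mul_sum]
  exact Finset.sum_congr rfl fun _ _ => Finset.sum_congr rfl fun _ _ => by ring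

lemma vecKron_dotProduct_vecKron {N m : ℕ} (u u' : Fin N → ℝ) (v v' : Fin m → ℝ) :
    vecKron u v ⬝ᵥ vecKron u' v' = (u ⬝ᵥ u') * (v ⬝ᵥ v') := by
  simp only [dotProduct, vecKron, Fintype.sum_prod_type, Finset.sum_mul_sum]
  exact Finset.sum_congr rfl fun _ _ => Finset.sum_congr rfl fun _ _ => by ring

/-- Since `A⊗ (e_k ⊗ w_k) = (M e_k) ⊗ (A_k w_k)`, `M`-orthonormality kills the cross terms. -/
lemma energy_sum_vecKron {N m : ℕ} (C M : Matrix (Fin N) (Fin N) ℝ)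
    (e : Fin N → Fin N → ℝ) (lam : Fin N → ℝ)
    (heig : ∀ j, C *ᵥ e j = lam j • (M *ᵥ e j))
    (hortho : ∀ j k, e j ⬝ᵥ (M *ᵥ e k) = if j = k then (1 : ℝ) else 0)
    (X Y : Matrix (Fin m) (Fin m) ℝ) (w : Fin N → Fin m → ℝ) :
    (∑ j, vecKron (e j) (w j)) ⬝ᵥ
        ((C ⊗ₖ X + M ⊗ₖ Y) *ᵥ ∑ j, vecKron (e j) (w j))
      = ∑ j, w j ⬝ᵥ ((lam j • X + Y) *ᵥ w j) := by
  have hpair : ∀ j k, vecKron (e j) (w j) ⬝ᵥ ((C ⊗ₖ X + M ⊗ₖ Y) *ᵥ vecKron (e k) (w k))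
      = if j = k then w j ⬝ᵥ ((lam k • X + Y) *ᵥ w k) else 0 := by
    intro j k
    rw [add_mulVec, kronecker_mulVec_vecKron_s13, kronecker_mulVec_vecKron_s13, dotProduct_add,
      vecKron_dotProduct_vecKron, vecKron_dotProduct_vecKron, heig, dotProduct_smul, hortho,
      add_mulVec, smul_mulVec, dotProduct_add, dotProduct_smul]
    split_ifs <;> simp
  rw [mulVec_sum, sum_dotProduct]
  refine Finset.sum_congr rfl fun j _ => ?_
  rw [dotProduct_sum]
  simp [hpair]

lemma exists_eq_sum_vecKron {N m : ℕ} (M : Matrix (Fin N) (Fin N) ℝ)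
    (e : Fin N → Fin N → ℝ)
    (hortho : ∀ j k, e j ⬝ᵥ (M *ᵥ e k) = if j = k then (1 : ℝ) else 0)
    (x : Fin N × Fin m → ℝ) :
    ∃ w : Fin N → Fin m → ℝ, x = ∑ j, vecKron (e j) (w j) := by
  -- `E` has rows `e_j`, and `E * (M * Eᵀ) = 1` is `M`-orthonormality.
  let E : Matrix (Fin N) (Fin N) ℝ := Matrix.of e
  have h1 : E * (M * Eᵀ) = 1 := by
    ext j k
    rw [one_apply, ← hortho j k]
    rfl
  -- A one-sided inverse of a square matrix is two-sided: the `e_j` span `ℝ^N`.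
  have h2 : (M * Eᵀ) * E = 1 := mul_eq_one_comm.mp h1
  refine ⟨fun j a => ∑ k, (M * Eᵀ) k j * x (k, a), ?_⟩
  ext ⟨i, a⟩
  have h3 : ∀ k, ∑ j, (M * Eᵀ) k j * e j i = if k = i then 1 else 0 := by
    intro k
    rw [← one_apply, ← h2]
    rfl
  simp only [Finset.sum_apply, vecKron, Finset.mul_sum]
  rw [Finset.sum_comm]
  calc x (i, a) = ∑ k, (∑ j, (M * Eᵀ) k j * e j i) * x (k, a) := by simp [h3]
    _ = _ := Finset.sum_congr rfl fun k _ => by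
      rw [Finset.sum_mul]
      exact Finset.sum_congr rfl fun j _ => by ring

/-- **Energy-norm contraction of the 3D iteration from uniform contraction on the vertical
eigenspaces.** If the iteration matrix `T` leaves each subspace `span{e_j} ⊗ ℝ^m`
invariant, acting there as `T_j`, and each `T_j` contracts the energy (semi-)norm of the
block `A_j = λ_j X + Y` with rate `ρ`, then `T` contracts the energy (semi-)norm of
`A⊗ = C ⊗ X + M ⊗ Y` with the same rate `ρ`. -/
theorem energy_contraction_3d_from_eigenspaces
    (N m : ℕ) (hN : 1 ≤ N) (hm : 1 ≤ m)
    (C M : Matrix (Fin N) (Fin N) ℝ)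
    (hCsymm : C.IsSymm) (hMsymm : M.IsSymm)
    (e : Fin N → Fin N → ℝ) (lam : Fin N → ℝ)
    (heig : ∀ j, C *ᵥ e j = lam j • (M *ᵥ e j))
    (hortho : ∀ j k, e j ⬝ᵥ (M *ᵥ e k) = if j = k then (1 : ℝ) else 0)
    (X Y : Matrix (Fin m) (Fin m) ℝ)
    (hXsymm : X.IsSymm) (hYsymm : Y.IsSymm)
    (hblockpsd : ∀ j, (lam j • X + Y).PosSemidef)
    (T : Matrix (Fin N × Fin m) (Fin N × Fin m) ℝ)
    (Tj : Fin N → Matrix (Fin m) (Fin m) ℝ)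
    (hT : ∀ (j : Fin N) (v : Fin m → ℝ), T *ᵥ vecKron (e j) v = vecKron (e j) (Tj j *ᵥ v))
    (ρ : ℝ) (hρ : 0 ≤ ρ)
    (hcontr : ∀ (j : Fin N) (v : Fin m → ℝ),
      (Tj j *ᵥ v) ⬝ᵥ ((lam j • X + Y) *ᵥ (Tj j *ᵥ v))
        ≤ ρ ^ 2 * (v ⬝ᵥ ((lam j • X + Y) *ᵥ v))) :
    ∀ x : Fin N × Fin m → ℝ,
      (T *ᵥ x) ⬝ᵥ ((C ⊗ₖ X + M ⊗ₖ Y) *ᵥ (T *ᵥ x))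
        ≤ ρ ^ 2 * (x ⬝ᵥ ((C ⊗ₖ X + M ⊗ₖ Y) *ᵥ x)) := by
  intro x
  obtain ⟨w, rfl⟩ := exists_eq_sum_vecKron M e hortho x
  have hTw : T *ᵥ (∑ j, vecKron (e j) (w j)) = ∑ j, vecKron (e j) (Tj j *ᵥ w j) := by
    simp only [mulVec_sum, hT]
  rw [hTw, energy_sum_vecKron C M e lam heig hortho,
    energy_sum_vecKron C M e lam heig hortho, Finset.mul_sum]
  exact Finset.sum_le_sum fun j _ => hcontr j (w j)
end
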